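/- Let R⁰ ∈ S²_B(⋀²ℝⁿ) be an Einstein algebraic curvature operator with s(R⁰) > 0 which is not a scalar multiple of id ∧ id (so R⁰ = R⁰_I + R⁰_W with R⁰_W ≠ 0), and suppose Q(R⁰) = λR⁰ with λ > 0 (necessarily λ = s(R⁰)/n). Then for every α₀ ∈ (0,1), the curve R(t) = (α₀/(1 − λα₀t)) R⁰_I + (1/(1 − λt)) R⁰_W, defined for t ∈ [0, 1/λ), satisfies dR/dt = Q(R(t)) with initial value R(0) = α₀R⁰_I + R⁰_W, and the normalized curve R(t)/‖R(t)_W‖ converges to R⁰_W/‖R⁰_W‖ as t → 1/λ. In particular the ODE dR/dt = Q(R) has, up to normalization, a solution curve emerging from a point arbitrarily close to R⁰ and approaching the normalized Weyl curvature of R⁰. -/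

import Mathlib

open scoped BigOperators
open Matrix Filter

noncomputable section

/-- `so n`: the Lie algebra of real skew-symmetric `n × n` matrices, as a submodule of
matrices.  It is the model for `⋀²ℝⁿ` under the identification `x ∧ y ↦ x yᵀ - y xᵀ`,
i.e. `(x ∧ y)(z) = ⟨y,z⟩x - ⟨x,z⟩y`. -/
def so (n : ℕ) : Submodule ℝ (Matrix (Fin n) (Fin n) ℝ) where
  carrier := {A | Aᵀ = -A}
  add_mem' := fun {a b} ha hb => by
    simp only [Set.mem_setOf_eq] at *
    rw [Matrix.transpose_add, ha, hb, neg_add]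
  zero_mem' := by simp
  smul_mem' := fun c {a} ha => by
    simp only [Set.mem_setOf_eq] at *
    rw [Matrix.transpose_smul, ha, smul_neg]

lemma mem_so {n : ℕ} {A : Matrix (Fin n) (Fin n) ℝ} : A ∈ so n ↔ Aᵀ = -A := Iff.rfl

lemma so_skew {n : ℕ} (X : so n) : (X.1)ᵀ = -X.1 := mem_so.mp X.2

lemma so_skew' {n : ℕ} (X : so n) (i j : Fin n) : X.1 j i = -X.1 i j := by
  have h := congrFun (congrFun (so_skew X) i) j
  simpa [Matrix.transpose_apply] using h

/-- The Lie bracket (matrix commutator) on `so n`. -/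
def brkt {n : ℕ} (X Y : so n) : so n :=
  ⟨X.1 * Y.1 - Y.1 * X.1, by
    rw [mem_so, Matrix.transpose_sub, Matrix.transpose_mul, Matrix.transpose_mul,
      so_skew X, so_skew Y]
    simp [neg_sub]⟩

/-- The inner product `⟨A, B⟩ = -(1/2) tr (A B)` on `so n ≅ ⋀²ℝⁿ`, for which
`{e_i ∧ e_j : i < j}` is orthonormal. -/
def ip {n : ℕ} (X Y : so n) : ℝ := -(1 / 2) * (X.1 * Y.1).trace

/-- `ip X` as a linear functional. -/
def ipL {n : ℕ} (X : so n) : so n →ₗ[ℝ] ℝ where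
  toFun Y := ip X Y
  map_add' Y Z := by
    simp [ip, Matrix.mul_add, Matrix.trace_add]
    ring
  map_smul' c Y := by
    simp [ip, Matrix.mul_smul, Matrix.trace_smul]
    ring

/-- The wedge `x ∧ y` of two vectors, as an element of `so n`. -/
def wedgeVec {n : ℕ} (x y : Fin n → ℝ) : so n :=
  ⟨Matrix.of fun i j => x i * y j - y i * x j, by
    rw [mem_so]
    ext i j
    simp [Matrix.transpose_apply]
    ring⟩

/-- Index set for the standard orthonormal basis `{e_i ∧ e_j : i < j}` of `so n`. -/
def pairs (n : ℕ) : Finset (Fin n × Fin n) := Finset.univ.filter (fun p => p.1 < p.2)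

/-- Standard basis vector of `ℝⁿ`. -/
def stdVec {n : ℕ} (i : Fin n) : Fin n → ℝ := Pi.single i 1

/-- The standard orthonormal basis element `e_i ∧ e_j` of `so n`. -/
def omegaB {n : ℕ} (p : Fin n × Fin n) : so n := wedgeVec (stdVec p.1) (stdVec p.2)

/-- Hamilton's sharp product `A # B` of self-adjoint endomorphisms of `⋀²ℝⁿ ≅ so n`:
`⟨(A # B)(φ), ψ⟩ = (1/2) Σ_{α,β} ⟨[A ω_α, B ω_β], φ⟩ ⟨[ω_α, ω_β], ψ⟩`
over the orthonormal basis `{ω_α} = {e_i ∧ e_j : i < j}`. -/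
def sharp {n : ℕ} (A B : Module.End ℝ (so n)) : Module.End ℝ (so n) :=
  (1 / 2 : ℝ) • ∑ p ∈ pairs n, ∑ q ∈ pairs n,
    (ipL (brkt (A (omegaB p)) (B (omegaB q)))).smulRight (brkt (omegaB p) (omegaB q))

/-- The bilinear map `Q(A,B) = (1/2)(AB + BA) + A # B`. -/
def Qbil {n : ℕ} (A B : Module.End ℝ (so n)) : Module.End ℝ (so n) :=
  (1 / 2 : ℝ) • (A * B + B * A) + sharp A B

/-- `Q(R) = R² + R # R`. -/
def Qop {n : ℕ} (R : Module.End ℝ (so n)) : Module.End ℝ (so n) := R * R + sharp R R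

/-- Self-adjointness of an endomorphism of `so n ≅ ⋀²ℝⁿ`. -/
def IsSelfAdjointCO {n : ℕ} (R : Module.End ℝ (so n)) : Prop :=
  ∀ X Y : so n, ip (R X) Y = ip X (R Y)

/-- The first Bianchi identity. -/
def SatBianchi {n : ℕ} (R : Module.End ℝ (so n)) : Prop :=
  ∀ x y z w : Fin n → ℝ,
    ip (R (wedgeVec x y)) (wedgeVec z w) + ip (R (wedgeVec y z)) (wedgeVec x w)
      + ip (R (wedgeVec z x)) (wedgeVec y w) = 0

/-- Algebraic curvature operators: self-adjoint endomorphisms of `⋀²ℝⁿ` satisfying the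
first Bianchi identity.  `IsACO R` says `R ∈ S²_B(⋀²ℝⁿ)`. -/
def IsACO {n : ℕ} (R : Module.End ℝ (so n)) : Prop := IsSelfAdjointCO R ∧ SatBianchi R

/-- The Ricci tensor of `R`, `Ric(R)_{ij} = Σ_k ⟨R(e_i ∧ e_k), e_j ∧ e_k⟩`. -/
def RicM {n : ℕ} (R : Module.End ℝ (so n)) : Matrix (Fin n) (Fin n) ℝ :=
  Matrix.of fun i j => ∑ k, ip (R (wedgeVec (stdVec i) (stdVec k))) (wedgeVec (stdVec j) (stdVec k))

/-- The scalar curvature `s(R) = tr Ric(R)`. -/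
def scal {n : ℕ} (R : Module.End ℝ (so n)) : ℝ := (RicM R).trace

/-- `‖Ric(R)‖² = tr (Ric(R)²)`. -/
def ricNormSq {n : ℕ} (R : Module.End ℝ (so n)) : ℝ := (RicM R * RicM R).trace

/-- The traceless Ricci tensor `Ric₀(R)`. -/
def Ric0M {n : ℕ} (R : Module.End ℝ (so n)) : Matrix (Fin n) (Fin n) ℝ :=
  RicM R - (scal R / n) • (1 : Matrix (Fin n) (Fin n) ℝ)

/-- `R` is Einstein if `Ric(R)` is a scalar multiple of the identity of `ℝⁿ`. -/
def IsEinstein {n : ℕ} (R : Module.End ℝ (so n)) : Prop :=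
  ∃ c : ℝ, RicM R = c • (1 : Matrix (Fin n) (Fin n) ℝ)

lemma wedgeEnd_key {n : ℕ} (A B : Matrix (Fin n) (Fin n) ℝ) (M : so n) :
    (A * M.1 * Bᵀ + B * M.1 * Aᵀ)ᵀ = -(A * M.1 * Bᵀ + B * M.1 * Aᵀ) := by
  have hM := so_skew M
  rw [Matrix.transpose_add, Matrix.transpose_mul, Matrix.transpose_mul,
    Matrix.transpose_mul, Matrix.transpose_mul, Matrix.transpose_transpose,
    Matrix.transpose_transpose, hM]
  simp only [Matrix.mul_neg, Matrix.neg_mul, Matrix.mul_assoc, neg_add]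
  abel

/-- The wedge `A ∧ B` of two endomorphisms of `ℝⁿ`, as an endomorphism of `⋀²ℝⁿ ≅ so n`:
`(A ∧ B)(v ∧ w) = (1/2)(Av ∧ Bw + Bv ∧ Aw)`, i.e. `M ↦ (1/2)(A M Bᵀ + B M Aᵀ)`. -/
def wedgeEnd {n : ℕ} (A B : Matrix (Fin n) (Fin n) ℝ) : Module.End ℝ (so n) where
  toFun M := ⟨(1 / 2 : ℝ) • (A * M.1 * Bᵀ + B * M.1 * Aᵀ), by
    rw [mem_so, Matrix.transpose_smul, wedgeEnd_key, smul_neg]⟩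
  map_add' M N := by
    apply Subtype.ext
    simp [Matrix.mul_add, Matrix.add_mul, smul_add]
    abel
  map_smul' c M := by
    apply Subtype.ext
    simp [Matrix.mul_smul, Matrix.smul_mul, smul_smul, mul_comm]

/-- Inner product `⟨A, B⟩ = tr(A ∘ B)` on endomorphisms of `⋀²ℝⁿ` (the Frobenius inner
product for self-adjoint operators). -/
def endIP {n : ℕ} (A B : Module.End ℝ (so n)) : ℝ := LinearMap.trace ℝ ↥(so n) (A * B)

/-- Norm of an endomorphism of `⋀²ℝⁿ` induced by `endIP`. -/
def endNorm {n : ℕ} (A : Module.End ℝ (so n)) : ℝ := Real.sqrt (endIP A A)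

/-- Huisken's trilinear form `tri(A,B,C) = tr((AB + BA + 2 A#B) ∘ C) = 2⟨Q(A,B), C⟩`. -/
def tri {n : ℕ} (A B C : Module.End ℝ (so n)) : ℝ :=
  LinearMap.trace ℝ ↥(so n) ((A * B + B * A + (2 : ℝ) • sharp A B) * C)

/-- The identity component `R_I = (s(R)/(n(n-1))) id ∧ id` of a curvature operator. -/
def compI {n : ℕ} (R : Module.End ℝ (so n)) : Module.End ℝ (so n) :=
  (scal R / ((n : ℝ) * ((n : ℝ) - 1))) • 1

/-- The traceless-Ricci component `R_{Ric₀} = (2/(n-2)) Ric₀(R) ∧ id`. -/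
def compRic0 {n : ℕ} (R : Module.End ℝ (so n)) : Module.End ℝ (so n) :=
  (2 / ((n : ℝ) - 2)) • wedgeEnd (Ric0M R) 1

/-- The Weyl component `R_W = R - R_I - R_{Ric₀}`. -/
def compW {n : ℕ} (R : Module.End ℝ (so n)) : Module.End ℝ (so n) := R - compI R - compRic0 R

/-- The derivative `DQ̃(R)` of the normalized vector field
`Q̃(R) = Q(R) - ‖Ric R‖² R` at `R`, applied to `A`:
`DQ̃(R)(A) = 2Q(R,A) - ‖Ric R‖² A - 2 tr(Ric R · Ric A) R`. -/
def DQt {n : ℕ} (R A : Module.End ℝ (so n)) : Module.End ℝ (so n) :=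
  (2 : ℝ) • Qbil R A - ricNormSq R • A - (2 * (RicM R * RicM A).trace) • R


/-- The normalized-instability curve
`t ↦ (α₀/(1-λα₀t)) R⁰_I + (1/(1-λt)) R⁰_W`. -/
def curveA {n : ℕ} (R0I R0W : Module.End ℝ (so n)) (lam a t : ℝ) :
    Module.End ℝ (so n) :=
  (a / (1 - lam * a * t)) • R0I + (1 / (1 - lam * t)) • R0W

lemma sum_pairs {n : ℕ} {M : Type*} [AddCommGroup M] [Module ℝ M] (f : Fin n × Fin n → M)
    (hsymm : ∀ i j, f (i, j) = f (j, i)) (hdiag : ∀ i, f (i, i) = 0) :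
    ∑ i, ∑ j, f (i, j) = (2 : ℝ) • ∑ p ∈ pairs n, f p := by
  have h1 : ∑ i, ∑ j, f (i, j) = ∑ p : Fin n × Fin n, f p := by
    rw [Fintype.sum_prod_type]
  have h2 : ∀ p : Fin n × Fin n, f p = (if p.1 < p.2 then f p else 0)
      + (if p.2 < p.1 then f p else 0) := by
    rintro ⟨i, j⟩
    rcases lt_trichotomy i j with h | h | h
    · simp [h, h.not_gt]
    · subst h; simp [hdiag]
    · simp [h, h.not_gt]
  have h3 : ∑ p : Fin n × Fin n, (if p.2 < p.1 then f p else 0)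
      = ∑ p : Fin n × Fin n, (if p.1 < p.2 then f p else 0) := by
    rw [← Equiv.sum_comp (Equiv.prodComm (Fin n) (Fin n))]
    refine Finset.sum_congr rfl ?_
    rintro ⟨i, j⟩ _
    show (if i < j then f (j, i) else 0) = (if i < j then f (i, j) else 0)
    rw [hsymm i j]
  rw [h1, Finset.sum_congr rfl (fun p _ => h2 p), Finset.sum_add_distrib, h3, pairs,
    Finset.sum_filter, two_smul]

lemma ip_comm {n : ℕ} (X Y : so n) : ip X Y = ip Y X := by
  simp only [ip]; rw [Matrix.trace_mul_comm]

lemma ip_brkt {n : ℕ} (X Y Z : so n) : ip (brkt X Y) Z = ip X (brkt Y Z) := by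
  simp only [ip, brkt, Matrix.sub_mul, Matrix.mul_sub, Matrix.trace_sub]
  rw [← Matrix.mul_assoc, ← Matrix.mul_assoc, Matrix.mul_assoc Y.1, Matrix.trace_mul_comm Y.1]

lemma ip_std {n : ℕ} (X : so n) (k l : Fin n) :
    ip X (wedgeVec (stdVec k) (stdVec l)) = X.1 k l := by
  have h : ∀ i j, X.1 i j * (wedgeVec (stdVec k) (stdVec l)).1 j i
      = (if j = k then (if i = l then X.1 i j else 0) else 0)
        - (if j = l then (if i = k then X.1 i j else 0) else 0) := by
    intro i j
    simp only [wedgeVec, stdVec, Matrix.of_apply, Pi.single_apply]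
    split_ifs <;> simp
  simp only [ip, Matrix.trace, Matrix.diag, Matrix.mul_apply, h, Finset.sum_sub_distrib]
  simp
  rw [so_skew' X k l]; ring

lemma wedge_swap {n : ℕ} (x y : Fin n → ℝ) : wedgeVec x y = - wedgeVec y x := by
  apply Subtype.ext; ext i j; simp [wedgeVec]

lemma wedge_self {n : ℕ} (x : Fin n → ℝ) : wedgeVec x x = 0 := by
  apply Subtype.ext; ext i j; simp [wedgeVec, mul_comm]

/-- full-sum expansion -/
lemma expand2 {n : ℕ} (X : so n) :
    ∑ i, ∑ j, X.1 i j • wedgeVec (stdVec i) (stdVec j) = (2 : ℝ) • X := by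
  apply Subtype.ext; ext a b
  simp only [Submodule.coe_sum, Submodule.coe_smul, Matrix.sum_apply, Matrix.smul_apply,
    smul_eq_mul]
  have h : ∀ i j, X.1 i j * (wedgeVec (stdVec i) (stdVec j)).1 a b
      = (if i = a then (if j = b then X.1 i j else 0) else 0)
        - (if i = b then (if j = a then X.1 i j else 0) else 0) := by
    intro i j
    simp only [wedgeVec, stdVec, Matrix.of_apply, Pi.single_apply, eq_comm (a := a),
      eq_comm (a := b)]
    split_ifs <;> simp
  simp only [h, Finset.sum_sub_distrib]
  simp
  rw [so_skew' X a b]; ring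

lemma expand {n : ℕ} (X : so n) : ∑ p ∈ pairs n, ip (omegaB p) X • omegaB p = X := by
  have h := sum_pairs (n := n) (fun p => ip (omegaB p) X • omegaB p)
    (by
      intro i j
      simp only [omegaB, ip_comm _ X, ip_std]
      rw [wedge_swap, so_skew' X j i]; simp)
    (by intro i; simp [omegaB, wedge_self])
  simp only [omegaB, ip_comm _ X, ip_std] at h
  rw [expand2] at h
  have h2 := smul_right_injective (so n) (two_ne_zero (α := ℝ)) h
  simp only [omegaB, ip_comm _ X, ip_std]
  exact h2.symm

/-- bracket as bilinear map -/
def brktL {n : ℕ} : so n →ₗ[ℝ] so n →ₗ[ℝ] so n :=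
  LinearMap.mk₂ ℝ brkt
    (by intro a b c; apply Subtype.ext; simp [brkt, Matrix.add_mul, Matrix.mul_add]; abel)
    (by intro a b c; apply Subtype.ext; simp [brkt, smul_sub])
    (by intro a b c; apply Subtype.ext; simp [brkt, Matrix.add_mul, Matrix.mul_add]; abel)
    (by intro a b c; apply Subtype.ext; simp [brkt, smul_sub])

lemma brktL_apply {n : ℕ} (X Y : so n) : brktL X Y = brkt X Y := rfl

lemma brkt_swap {n : ℕ} (X Y : so n) : brkt X Y = - brkt Y X := by
  apply Subtype.ext; simp [brkt]

def ipLL {n : ℕ} : so n →ₗ[ℝ] so n →ₗ[ℝ] ℝ :=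
  LinearMap.mk₂ ℝ ip
    (by intro a b c; simp [ip, Matrix.add_mul, Matrix.trace_add]; ring)
    (by intro a b c; simp [ip]; ring)
    (by intro a b c; simp [ip, Matrix.mul_add, Matrix.trace_add]; ring)
    (by intro a b c; simp [ip]; ring)

lemma ipLL_apply {n : ℕ} (X Y : so n) : ipLL X Y = ip X Y := rfl
lemma ipL_apply' {n : ℕ} (X Y : so n) : ipL X Y = ip X Y := rfl

lemma sharp_apply {n : ℕ} (A B : Module.End ℝ (so n)) (φ : so n) :
    sharp A B φ = (1 / 2 : ℝ) • ∑ p ∈ pairs n, ∑ q ∈ pairs n,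
      ip (brkt (A (omegaB p)) (B (omegaB q))) φ • brkt (omegaB p) (omegaB q) := by
  simp [sharp, LinearMap.sum_apply, ipL_apply']

lemma sharp_comm {n : ℕ} (A B : Module.End ℝ (so n)) : sharp A B = sharp B A := by
  ext1 φ
  rw [sharp_apply, sharp_apply, Finset.sum_comm]
  congr 1
  refine Finset.sum_congr rfl fun q _ => Finset.sum_congr rfl fun p _ => ?_
  rw [brkt_swap (A _), brkt_swap (omegaB p)]
  simp only [← ipLL_apply, map_neg, LinearMap.neg_apply, neg_smul, smul_neg, neg_neg]

lemma sharp_add_left {n : ℕ} (A B C : Module.End ℝ (so n)) :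
    sharp (A + B) C = sharp A C + sharp B C := by
  ext1 φ
  simp only [LinearMap.add_apply, sharp_apply, ← ipLL_apply, ← brktL_apply, map_add, add_smul,
    Finset.sum_add_distrib, smul_add]

lemma sharp_smul_left {n : ℕ} (c : ℝ) (A C : Module.End ℝ (so n)) :
    sharp (c • A) C = c • sharp A C := by
  ext1 φ
  simp only [LinearMap.smul_apply, sharp_apply, ← ipLL_apply, ← brktL_apply, map_smul,
    smul_eq_mul, mul_smul, ← Finset.smul_sum]
  rw [smul_comm]

lemma sharp_add_right {n : ℕ} (A B C : Module.End ℝ (so n)) :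
    sharp C (A + B) = sharp C A + sharp C B := by
  rw [sharp_comm, sharp_add_left, sharp_comm A, sharp_comm B]

lemma sharp_smul_right {n : ℕ} (c : ℝ) (A C : Module.End ℝ (so n)) :
    sharp C (c • A) = c • sharp C A := by
  rw [sharp_comm, sharp_smul_left, sharp_comm A]

lemma sharp_eq {n : ℕ} (A B : Module.End ℝ (so n)) (hB : IsSelfAdjointCO B) (φ : so n) :
    sharp A B φ = (1 / 2 : ℝ) • ∑ p ∈ pairs n,
      brkt (omegaB p) (B (brkt φ (A (omegaB p)))) := by
  rw [sharp_apply]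
  congr 1
  refine Finset.sum_congr rfl fun p _ => ?_
  have : ∀ q, ip (brkt (A (omegaB p)) (B (omegaB q))) φ
      = ip (omegaB q) (B (brkt φ (A (omegaB p)))) := by
    intro q
    rw [ip_comm, ← ip_brkt, ip_comm, hB]
  simp only [this]
  conv_rhs => rw [← expand (B (brkt φ (A (omegaB p))))]
  simp only [← brktL_apply, map_sum, map_smul]

lemma trace_eq {n : ℕ} (F : Module.End ℝ (so n)) :
    LinearMap.trace ℝ ↥(so n) F = ∑ p ∈ pairs n, ip (omegaB p) (F (omegaB p)) := by
  have h : F = ∑ p ∈ pairs n, (ipL (omegaB p)).smulRight (F (omegaB p)) := by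
    ext1 X
    conv_lhs => rw [← expand X]
    simp [LinearMap.sum_apply, ipL_apply']
  conv_lhs => rw [h]
  rw [map_sum]
  refine Finset.sum_congr rfl fun p _ => ?_
  rw [LinearMap.trace_smulRight]; rfl

lemma scal_eq {n : ℕ} (R : Module.End ℝ (so n)) :
    scal R = 2 * LinearMap.trace ℝ ↥(so n) R := by
  have h := sum_pairs (n := n) (fun p => ip (omegaB p) (R (omegaB p)))
    (by
      intro i j
      simp only [omegaB]
      rw [wedge_swap (stdVec i)]; simp [← ipLL_apply])
    (by intro i; simp [omegaB, wedge_self, ← ipLL_apply])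
  rw [trace_eq, ← smul_eq_mul, ← h]
  simp only [scal, Matrix.trace, Matrix.diag, RicM, Matrix.of_apply, omegaB]
  refine Finset.sum_congr rfl fun p _ => Finset.sum_congr rfl fun q _ => ip_comm _ _

lemma swap_sum {n : ℕ} (A : Module.End ℝ (so n)) (hA : IsSelfAdjointCO A)
    {M : Type*} [AddCommGroup M] [Module ℝ M] (f : so n →ₗ[ℝ] so n →ₗ[ℝ] M) :
    ∑ p ∈ pairs n, f (omegaB p) (A (omegaB p)) = ∑ p ∈ pairs n, f (A (omegaB p)) (omegaB p) := by
  have h1 : ∀ p, f (omegaB p) (A (omegaB p))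
      = ∑ q ∈ pairs n, ip (omegaB q) (A (omegaB p)) • f (omegaB p) (omegaB q) := by
    intro p
    conv_lhs => rw [← expand (A (omegaB p))]
    simp only [map_sum, map_smul]
  have h2 : ∀ p, f (A (omegaB p)) (omegaB p)
      = ∑ q ∈ pairs n, ip (omegaB q) (A (omegaB p)) • f (omegaB q) (omegaB p) := by
    intro p
    conv_lhs => rw [← expand (A (omegaB p))]
    simp only [map_sum, map_smul, LinearMap.sum_apply, LinearMap.smul_apply]
  simp only [h1, h2]
  rw [Finset.sum_comm]
  refine Finset.sum_congr rfl fun q _ => Finset.sum_congr rfl fun p _ => ?_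
  rw [← hA, ip_comm]

lemma one_sa {n : ℕ} : IsSelfAdjointCO (1 : Module.End ℝ (so n)) := fun _ _ => rfl

lemma sharp_eq' {n : ℕ} (A B : Module.End ℝ (so n)) (hB : IsSelfAdjointCO B) :
    sharp A B = (-(1 / 2) : ℝ) • ∑ p ∈ pairs n,
      (brktL (omegaB p) * B * brktL (A (omegaB p)) : Module.End ℝ (so n)) := by
  ext1 φ
  rw [sharp_eq A B hB, LinearMap.smul_apply, neg_smul, ← smul_neg, LinearMap.sum_apply,
    ← Finset.sum_neg_distrib]
  congr 1
  refine Finset.sum_congr rfl fun p _ => ?_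
  rw [brkt_swap φ]
  simp only [LinearMap.neg_apply, Module.End.mul_apply, ← brktL_apply, map_neg]

lemma trace_sharp {n : ℕ} (A : Module.End ℝ (so n)) (hA : IsSelfAdjointCO A) :
    LinearMap.trace ℝ ↥(so n) (sharp A A) = LinearMap.trace ℝ ↥(so n) (A * sharp A 1) := by
  rw [sharp_eq' A A hA, sharp_eq' A 1 one_sa, mul_smul_comm, Finset.mul_sum, map_smul, map_smul,
    map_sum, map_sum]
  congr 1
  let f : so n →ₗ[ℝ] so n →ₗ[ℝ] ℝ := LinearMap.mk₂ ℝ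
    (fun X Y => LinearMap.trace ℝ ↥(so n) (A * ((brktL X : Module.End ℝ (so n)) * 1 * (brktL Y : Module.End ℝ (so n)))))
    (by intro a b c; simp only [map_add, add_mul, mul_add])
    (by intro a b c; simp only [map_smul, smul_mul_assoc, mul_smul_comm])
    (by intro a b c; simp only [map_add, add_mul, mul_add])
    (by intro a b c; simp only [map_smul, smul_mul_assoc, mul_smul_comm])
  have h := swap_sum A hA f
  simp only [f, LinearMap.mk₂_apply] at h
  rw [h]
  refine Finset.sum_congr rfl fun p _ => ?_
  rw [mul_one, mul_assoc, LinearMap.trace_mul_comm, mul_assoc]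

/-- matrix-entries of the curvature operator -/
def ent {n : ℕ} (R : Module.End ℝ (so n)) (i j k l : Fin n) : ℝ :=
  (R (wedgeVec (stdVec i) (stdVec j))).1 k l

lemma ent_swap {n : ℕ} (R : Module.End ℝ (so n)) (i j k l : Fin n) :
    ent R i j k l = - ent R j i k l := by
  simp only [ent]; rw [wedge_swap]; simp

lemma ent_swap' {n : ℕ} (R : Module.End ℝ (so n)) (i j k l : Fin n) :
    ent R i j k l = - ent R i j l k := by
  simp only [ent]; rw [so_skew']

lemma ent_symm {n : ℕ} (R : Module.End ℝ (so n)) (h : IsSelfAdjointCO R) (i j k l : Fin n) :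
    ent R i j k l = ent R k l i j := by
  simp only [ent]; rw [← ip_std, h, ip_comm, ip_std]

lemma ent_bianchi {n : ℕ} (R : Module.End ℝ (so n)) (h : SatBianchi R) (i j k l : Fin n) :
    ent R i j k l + ent R j k i l + ent R k i j l = 0 := by
  have := h (stdVec i) (stdVec j) (stdVec k) (stdVec l)
  simpa only [ip_std, ent] using this

lemma ric_ent {n : ℕ} (R : Module.End ℝ (so n)) (i j : Fin n) :
    RicM R i j = ∑ k, ent R i k j k := by
  simp [RicM, ip_std, ent]

lemma apply_ent {n : ℕ} (R : Module.End ℝ (so n)) (φ : so n) (a b : Fin n) :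
    ∑ j, ∑ k, φ.1 j k * ent R j k a b = 2 * (R φ).1 a b := by
  have h := congrArg (fun X => (R X).1 a b) (expand2 φ)
  simpa [Matrix.sum_apply, ent] using h

lemma curv_sum {n : ℕ} (R : Module.End ℝ (so n)) (h : SatBianchi R) (φ : so n) (a b : Fin n) :
    ∑ j, ∑ k, φ.1 j k * ent R a j k b = - (R φ).1 a b := by
  have h1 : ∑ j, ∑ k, φ.1 j k * ent R a j k b = - ∑ j, ∑ k, φ.1 j k * ent R a k j b := by
    rw [Finset.sum_comm, ← Finset.sum_neg_distrib]
    refine Finset.sum_congr rfl fun j _ => ?_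
    rw [← Finset.sum_neg_distrib]
    refine Finset.sum_congr rfl fun k _ => ?_
    rw [so_skew' φ j k]; ring
  have h2 : ∑ j, ∑ k, φ.1 j k * ent R a j k b - ∑ j, ∑ k, φ.1 j k * ent R a k j b
      = - ∑ j, ∑ k, φ.1 j k * ent R j k a b := by
    simp only [← Finset.sum_sub_distrib, ← Finset.sum_neg_distrib]
    refine Finset.sum_congr rfl fun j _ => Finset.sum_congr rfl fun k _ => ?_
    have := ent_bianchi R h a j k b
    rw [ent_swap R k a] at this
    linear_combination φ.1 j k * this
  rw [apply_ent] at h2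
  linarith

lemma std_mul {n : ℕ} (M : Matrix (Fin n) (Fin n) ℝ) (i j a b : Fin n) :
    ((wedgeVec (stdVec i) (stdVec j)).1 * M) a b
      = (if i = a then M j b else 0) - (if j = a then M i b else 0) := by
  have h : ∀ k, (wedgeVec (stdVec i) (stdVec j)).1 a k * M k b
      = (if k = j then (if i = a then M k b else 0) else 0)
        - (if k = i then (if j = a then M k b else 0) else 0) := by
    intro k
    simp only [wedgeVec, stdVec, Matrix.of_apply, Pi.single_apply, eq_comm (a := a)]
    split_ifs <;> simp
  simp only [Matrix.mul_apply, h, Finset.sum_sub_distrib]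
  simp

lemma mul_std {n : ℕ} (M : Matrix (Fin n) (Fin n) ℝ) (i j a b : Fin n) :
    (M * (wedgeVec (stdVec i) (stdVec j)).1) a b
      = (if j = b then M a i else 0) - (if i = b then M a j else 0) := by
  have h : ∀ k, M a k * (wedgeVec (stdVec i) (stdVec j)).1 k b
      = (if k = i then (if j = b then M a k else 0) else 0)
        - (if k = j then (if i = b then M a k else 0) else 0) := by
    intro k
    simp only [wedgeVec, stdVec, Matrix.of_apply, Pi.single_apply, eq_comm (a := b)]
    split_ifs <;> simp
  simp only [Matrix.mul_apply, h, Finset.sum_sub_distrib]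
  simp

lemma sum_half {n : ℕ} (R : Module.End ℝ (so n)) (φ : so n) :
    ∑ i, ∑ j, brkt (wedgeVec (stdVec i) (stdVec j)) (brkt φ (R (wedgeVec (stdVec i) (stdVec j))))
      = (4 : ℝ) • sharp R 1 φ := by
  rw [sharp_eq R 1 one_sa, smul_smul]
  have h := sum_pairs (n := n) (fun p => brkt (omegaB p) (brkt φ (R (omegaB p))))
    (by
      intro i j
      simp only [omegaB]
      rw [wedge_swap (stdVec i)]; simp [← brktL_apply])
    (by intro i; simp [omegaB, wedge_self, ← brktL_apply])
  simp only [omegaB] at h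
  rw [h]; norm_num [omegaB]

lemma ent_diag_sum {n : ℕ} (R : Module.End ℝ (so n)) (φ : so n) (a b : Fin n) :
    (∑ i, ∑ j, brkt (wedgeVec (stdVec i) (stdVec j))
      (brkt φ (R (wedgeVec (stdVec i) (stdVec j))))).1 a b
    = 2 * ∑ j, ∑ k, φ.1 j k * ent R a j k b + 2 * ∑ k, RicM R a k * φ.1 k b
      + 2 * ∑ k, φ.1 a k * RicM R b k + 2 * ∑ j, ∑ k, ent R j b a k * φ.1 k j := by
  have hP : ∀ i j, (brkt φ (R (wedgeVec (stdVec i) (stdVec j)))).1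
      = -(brkt φ (R (wedgeVec (stdVec j) (stdVec i)))).1 := by
    intro i j; rw [wedge_swap (stdVec i)]; simp [← brktL_apply]
  have hM : ∀ i j k l, (brkt φ (R (wedgeVec (stdVec i) (stdVec j)))).1 k l
      = ∑ m, φ.1 k m * ent R i j m l - ∑ m, ent R i j k m * φ.1 m l := by
    intro i j k l
    simp [brkt, Matrix.mul_apply, ent]
  have hL : (∑ i, ∑ j, brkt (wedgeVec (stdVec i) (stdVec j))
      (brkt φ (R (wedgeVec (stdVec i) (stdVec j))))).1 a b
      = 2 * ∑ j, (brkt φ (R (wedgeVec (stdVec a) (stdVec j)))).1 j b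
        - 2 * ∑ j, (brkt φ (R (wedgeVec (stdVec j) (stdVec b)))).1 a j := by
    have : ∀ i j, (brkt (wedgeVec (stdVec i) (stdVec j))
      (brkt φ (R (wedgeVec (stdVec i) (stdVec j))))).1 a b
      = ((if i = a then (brkt φ (R (wedgeVec (stdVec i) (stdVec j)))).1 j b else 0)
        + (if j = a then (brkt φ (R (wedgeVec (stdVec j) (stdVec i)))).1 i b else 0))
        - ((if j = b then (brkt φ (R (wedgeVec (stdVec i) (stdVec j)))).1 a i else 0)
        + (if i = b then (brkt φ (R (wedgeVec (stdVec j) (stdVec i)))).1 a j else 0)) := by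
      intro i j
      have hb : ∀ X Y : so n, (brkt X Y).1 a b = (X.1 * Y.1) a b - (Y.1 * X.1) a b :=
        fun _ _ => rfl
      rw [hb, std_mul, mul_std, hP j i]
      simp only [Matrix.neg_apply]
      split_ifs <;> ring
    simp only [Submodule.coe_sum, Matrix.sum_apply, this, Finset.sum_sub_distrib,
      Finset.sum_add_distrib]
    simp only [Finset.sum_ite_eq', Finset.mem_univ, if_true, Finset.sum_ite_irrel,
      Finset.sum_const_zero]
    ring
  rw [hL]
  simp only [hM, Finset.sum_sub_distrib]
  have e1 : ∑ j, ∑ m, ent R a j j m * φ.1 m b = - ∑ k, RicM R a k * φ.1 k b := by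
    rw [Finset.sum_comm, ← Finset.sum_neg_distrib]
    refine Finset.sum_congr rfl fun k _ => ?_
    rw [ric_ent, Finset.sum_mul, ← Finset.sum_neg_distrib]
    refine Finset.sum_congr rfl fun j _ => ?_
    rw [ent_swap' R a j j k]; ring
  have e2 : ∑ j, ∑ m, φ.1 a m * ent R j b m j = - ∑ k, φ.1 a k * RicM R b k := by
    rw [Finset.sum_comm, ← Finset.sum_neg_distrib]
    refine Finset.sum_congr rfl fun k _ => ?_
    rw [ric_ent, Finset.mul_sum, ← Finset.sum_neg_distrib]
    refine Finset.sum_congr rfl fun j _ => ?_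
    rw [ent_swap R j b k j]; ring
  rw [e1, e2]; ring

/-- `R + R # I = Ric ∧ id`, in the Einstein case. -/
lemma key {n : ℕ} (R : Module.End ℝ (so n)) (hR : IsACO R) (c : ℝ)
    (hc : RicM R = c • (1 : Matrix (Fin n) (Fin n) ℝ)) :
    R + sharp R 1 = c • (1 : Module.End ℝ (so n)) := by
  ext1 φ
  apply Subtype.ext
  ext a b
  have h1 := ent_diag_sum R φ a b
  rw [sum_half] at h1
  have h2 : ∑ j, ∑ k, ent R j b a k * φ.1 k j = ∑ j, ∑ k, φ.1 j k * ent R a j k b := by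
    rw [Finset.sum_comm]
    refine Finset.sum_congr rfl fun k _ => Finset.sum_congr rfl fun j _ => ?_
    rw [ent_symm R hR.1]; ring
  have h3 : ∑ k, RicM R a k * φ.1 k b = c * φ.1 a b := by
    simp [hc, Matrix.one_apply]
  have h4 : ∑ k, φ.1 a k * RicM R b k = c * φ.1 a b := by
    simp [hc, Matrix.one_apply, mul_comm]
  rw [h2, h3, h4, curv_sum R hR.2] at h1
  simp only [Submodule.coe_smul, Matrix.smul_apply, smul_eq_mul] at h1
  simp only [LinearMap.add_apply, Submodule.coe_add, Matrix.add_apply, LinearMap.smul_apply,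
    Submodule.coe_smul, Matrix.smul_apply, smul_eq_mul, Module.End.one_apply]
  linarith

lemma ip_wedge {n : ℕ} (x y z w : Fin n → ℝ) : ip (wedgeVec x y) (wedgeVec z w)
    = (x ⬝ᵥ z) * (y ⬝ᵥ w) - (x ⬝ᵥ w) * (y ⬝ᵥ z) := by
  have h : ∀ i j, (wedgeVec x y).1 i j * (wedgeVec z w).1 j i
      = (x i * w i) * (y j * z j) + (y i * z i) * (x j * w j)
       - (x i * z i) * (y j * w j) - (y i * w i) * (x j * z j) := by
    intro i j; simp [wedgeVec]; ring
  simp only [ip, Matrix.trace, Matrix.diag, Matrix.mul_apply, h, Finset.sum_sub_distrib,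
    Finset.sum_add_distrib, ← Finset.mul_sum, ← Finset.sum_mul, dotProduct]
  ring

lemma one_aco {n : ℕ} : IsACO (1 : Module.End ℝ (so n)) := by
  refine ⟨one_sa, fun x y z w => ?_⟩
  simp only [Module.End.one_apply, ip_wedge]
  rw [dotProduct_comm y x, dotProduct_comm z x, dotProduct_comm z y]
  ring

lemma ric_one {n : ℕ} : RicM (1 : Module.End ℝ (so n))
    = ((n : ℝ) - 1) • (1 : Matrix (Fin n) (Fin n) ℝ) := by
  ext i j
  simp only [ric_ent, ent, Module.End.one_apply, wedgeVec, stdVec, Matrix.of_apply,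
    Pi.single_apply, Matrix.smul_apply, Matrix.one_apply, smul_eq_mul]
  rw [Finset.sum_sub_distrib]
  by_cases h : i = j
  · subst h; simp
  · simp [h, Ne.symm h]

lemma ric_add {n : ℕ} (A B : Module.End ℝ (so n)) : RicM (A + B) = RicM A + RicM B := by
  ext i j
  simp [ric_ent, ent, Finset.sum_add_distrib]

lemma ric_smul {n : ℕ} (c : ℝ) (A : Module.End ℝ (so n)) : RicM (c • A) = c • RicM A := by
  ext i j
  simp [ric_ent, ent, Finset.mul_sum]

lemma compRic0_zero {n : ℕ} (hn : (n : ℝ) ≠ 0) (R : Module.End ℝ (so n)) (c : ℝ)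
    (hc : RicM R = c • (1 : Matrix (Fin n) (Fin n) ℝ)) :
    scal R = n * c ∧ compRic0 R = 0 := by
  have hs : scal R = n * c := by simp [scal, hc, mul_comm]
  refine ⟨hs, ?_⟩
  have h0 : Ric0M R = 0 := by
    rw [Ric0M, hs, hc, mul_div_cancel_left₀ _ hn, sub_self]
  have h1 : wedgeEnd (0 : Matrix (Fin n) (Fin n) ℝ) 1 = 0 := by
    ext1 φ; apply Subtype.ext; simp [wedgeEnd]
  rw [compRic0, h0, h1, smul_zero]

lemma Qop_comb {n : ℕ} (W : Module.End ℝ (so n)) (hW : W + sharp W 1 = 0) (x y : ℝ) :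
    Qop (x • (1 : Module.End ℝ (so n)) + y • W)
      = (x ^ 2 * ((n : ℝ) - 1)) • (1 : Module.End ℝ (so n)) + y ^ 2 • Qop W := by
  have h1 := key (1 : Module.End ℝ (so n)) one_aco _ ric_one
  have h1' : sharp (1 : Module.End ℝ (so n)) 1 = ((n : ℝ) - 1) • 1 - 1 := by
    rw [← h1]; abel
  have hW' : sharp W 1 = - W := by
    ext1 φ
    exact eq_neg_of_add_eq_zero_right (LinearMap.congr_fun hW φ)
  have hW'' : sharp 1 W = - W := by rw [sharp_comm, hW']
  simp only [Qop, sharp_add_left, sharp_add_right, sharp_smul_left, sharp_smul_right, h1', hW',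
    hW'', add_mul, mul_add, smul_mul_assoc, mul_smul_comm, one_mul, mul_one]
  module

lemma endNorm_smul {n : ℕ} (y : ℝ) (hy : 0 ≤ y) (W : Module.End ℝ (so n)) :
    endNorm (y • W) = y * endNorm W := by
  simp only [endNorm, endIP, smul_mul_assoc, mul_smul_comm, map_smul, smul_eq_mul]
  rw [← mul_assoc, Real.sqrt_mul (mul_self_nonneg y), Real.sqrt_mul_self hy]

/-- Let `R⁰ ∈ S²_B(⋀²ℝⁿ)` be Einstein with `s(R⁰) > 0`, not a scalar
multiple of `id ∧ id` (so `R⁰ = R⁰_I + R⁰_W` with `R⁰_W ≠ 0`), with `Q(R⁰) = λR⁰`,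
`λ > 0` (necessarily `λ = s(R⁰)/n`).  For every `α₀ ∈ (0,1)` the curve
`R(t) = (α₀/(1-λα₀t)) R⁰_I + (1/(1-λt)) R⁰_W` on `[0, 1/λ)` solves `dR/dt = Q(R(t))`
(componentwise, i.e. in every matrix entry of every value), starts at
`α₀ R⁰_I + R⁰_W`, and the normalization `R(t)/‖R(t)_W‖` converges to `R⁰_W/‖R⁰_W‖` as
`t → 1/λ`: the ODE `dR/dt = Q(R)` is unstable near `R⁰`. -/
theorem stmt3 (n : ℕ) (R0 : Module.End ℝ (so n))
    (hACO : IsACO R0) (hEin : IsEinstein R0) (hs : 0 < scal R0)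
    (hnotI : ¬ ∃ c : ℝ, R0 = c • (1 : Module.End ℝ (so n)))
    (lam : ℝ) (hlam : 0 < lam) (hQ : Qop R0 = lam • R0) :
    lam = scal R0 / n ∧
    R0 = compI R0 + compW R0 ∧ compW R0 ≠ 0 ∧
    ∀ a ∈ Set.Ioo (0 : ℝ) 1,
      (∀ t ∈ Set.Ico (0 : ℝ) (1 / lam), ∀ (φ : so n) (i j : Fin n),
        HasDerivAt (fun s => ((curveA (compI R0) (compW R0) lam a s) φ).1 i j)
          (((Qop (curveA (compI R0) (compW R0) lam a t)) φ).1 i j) t) ∧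
      curveA (compI R0) (compW R0) lam a 0 = a • compI R0 + compW R0 ∧
      (∀ (φ : so n) (i j : Fin n),
        Filter.Tendsto
          (fun t => (endNorm (compW (curveA (compI R0) (compW R0) lam a t)))⁻¹ *
            ((curveA (compI R0) (compW R0) lam a t) φ).1 i j)
          (nhdsWithin (1 / lam) (Set.Iio (1 / lam)))
          (nhds ((endNorm (compW R0))⁻¹ * ((compW R0) φ).1 i j))) := by
  obtain ⟨c, hc⟩ := hEin
  have hn1 : (n : ℝ) ≠ 0 := by
    rintro h
    have : n = 0 := by exact_mod_cast h
    subst this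
    simp [scal] at hs
  obtain ⟨hsc, hr0⟩ := compRic0_zero hn1 R0 c hc
  have hnpos : (0 : ℝ) < n := lt_of_le_of_ne (Nat.cast_nonneg n) (Ne.symm hn1)
  have hcpos : 0 < c := by
    rw [hsc] at hs; exact pos_of_mul_pos_right hs hnpos.le
  have hn2 : (n : ℝ) - 1 ≠ 0 := by
    intro h
    have hn : n = 1 := by
      have : (n : ℝ) = 1 := by linarith
      exact_mod_cast this
    subst hn
    rw [scal_eq, trace_eq] at hs
    simp [pairs] at hs
    rw [Finset.filter_false_of_mem (by intro p _; rw [Subsingleton.elim p.1 p.2]; exact lt_irrefl _)] at hs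
    simp at hs
  have hk := key R0 hACO c hc
  have hlc : lam = c := by
    have h1 := congrArg (LinearMap.trace ℝ ↥(so n)) hQ
    rw [Qop, map_add, trace_sharp R0 hACO.1, ← map_add, ← mul_add, hk, mul_smul_comm, mul_one,
      map_smul, map_smul, smul_eq_mul, smul_eq_mul] at h1
    have h2 : LinearMap.trace ℝ ↥(so n) R0 ≠ 0 := by
      intro h; rw [scal_eq, h] at hs; simp at hs
    exact (mul_right_cancel₀ h2 h1).symm
  set κ : ℝ := c / ((n : ℝ) - 1) with hκ
  have hκc : κ * ((n : ℝ) - 1) = c := div_mul_cancel₀ _ hn2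
  have hI : compI R0 = κ • (1 : Module.End ℝ (so n)) := by
    rw [compI, hsc, hκ, mul_div_mul_left _ _ hn1]
  have hdec : R0 = compI R0 + compW R0 := by
    rw [compW, hr0]; abel
  have hWne : compW R0 ≠ 0 := by
    intro h
    apply hnotI
    refine ⟨κ, ?_⟩
    rw [h, add_zero, hI] at hdec
    exact hdec
  refine ⟨by rw [hlc, hsc, mul_div_cancel_left₀ _ hn1], hdec, hWne, ?_⟩
  rw [hI] at hdec ⊢
  generalize hWdef : compW R0 = W at *
  have hRicW : RicM W = 0 := by
    have h := hc
    rw [hdec, ric_add, ric_smul, ric_one, smul_smul, hκc] at h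
    simpa using h
  have h1 := key (1 : Module.End ℝ (so n)) one_aco _ ric_one
  have hW : W + sharp W 1 = 0 := by
    have h : κ • ((1 : Module.End ℝ (so n)) + sharp 1 1) + (W + sharp W 1) = c • 1 := by
      rw [← hk]
      conv_rhs => rw [hdec]
      rw [sharp_add_left, sharp_smul_left]; module
    rw [h1, smul_smul, hκc] at h
    ext1 φ
    exact add_left_cancel ((LinearMap.congr_fun h φ).trans (add_zero _).symm)
  have hQW : Qop W = c • W := by
    have h := hQ
    rw [hlc, hdec] at h
    have h' := Qop_comb W hW κ 1
    rw [one_smul, h] at h'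
    have e : κ ^ 2 * ((n : ℝ) - 1) = c * κ := by rw [← hκc]; ring
    rw [e, smul_add, smul_smul, one_pow, one_smul] at h'
    ext1 φ
    exact (add_left_cancel (LinearMap.congr_fun h' φ)).symm
  subst hlc
  rintro a ⟨ha0, ha1⟩
  have hden : ∀ t < 1 / lam, 0 < 1 - lam * t ∧ 0 < 1 - lam * a * t := by
    intro t ht
    have h1 : lam * t < 1 := by
      rw [lt_div_iff₀ hlam] at ht; linarith
    refine ⟨by linarith, ?_⟩
    have : a * (lam * t) < 1 := by nlinarith
    nlinarith
  refine ⟨?_, ?_, ?_⟩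
  · rintro t ⟨_, ht⟩ φ i j
    obtain ⟨hd1, hd2⟩ := hden t ht
    simp only [curveA]
    rw [smul_smul, Qop_comb W hW, hQW]
    simp only [LinearMap.add_apply, Submodule.coe_add, Matrix.add_apply, LinearMap.smul_apply,
      Submodule.coe_smul, Matrix.smul_apply, smul_eq_mul, Module.End.one_apply]
    have hx : HasDerivAt (fun s : ℝ => a / (1 - lam * a * s))
        (a * (lam * a) / (1 - lam * a * t) ^ 2) t := by
      have hb : HasDerivAt (fun s : ℝ => 1 - lam * a * s) (-(lam * a)) t := by
        simpa using ((hasDerivAt_id t).const_mul (lam * a)).const_sub 1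
      have := (hasDerivAt_const t a).div hb hd2.ne'
      exact this.congr_deriv (by ring)
    have hy : HasDerivAt (fun s : ℝ => 1 / (1 - lam * s)) (lam / (1 - lam * t) ^ 2) t := by
      have hb : HasDerivAt (fun s : ℝ => 1 - lam * s) (-lam) t := by
        simpa using ((hasDerivAt_id t).const_mul lam).const_sub 1
      have := (hasDerivAt_const t (1 : ℝ)).div hb hd1.ne'
      exact this.congr_deriv (by ring)
    refine ((hx.mul_const (κ * φ.1 i j)).add (hy.mul_const ((W φ).1 i j))).congr_deriv ?_
    have : (a / (1 - lam * a * t) * κ) ^ 2 * ((n : ℝ) - 1)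
        = (a / (1 - lam * a * t)) ^ 2 * κ * lam := by rw [← hκc]; ring
    rw [this]
    have := hd1.ne'
    have := hd2.ne'
    field_simp
  · simp [curveA]
  · intro φ i j
    have hcw : ∀ t, compW (curveA (κ • (1 : Module.End ℝ (so n))) W lam a t)
        = (1 / (1 - lam * t)) • W := by
      intro t
      have hr : RicM (curveA (κ • (1 : Module.End ℝ (so n))) W lam a t)
          = (a / (1 - lam * a * t) * lam) • (1 : Matrix (Fin n) (Fin n) ℝ) := by
        rw [curveA, ric_add, ric_smul, ric_smul, ric_smul, hRicW, ric_one, smul_smul κ, hκc,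
          smul_smul, smul_zero, add_zero]
      obtain ⟨hs', hr'⟩ := compRic0_zero hn1 _ _ hr
      rw [compW, hr', compI, hs', mul_div_mul_left _ _ hn1, mul_div_assoc, ← hκ, curveA, smul_smul]
      abel
    have hev : (fun t => (endNorm W)⁻¹ *
        ((1 - lam * t) * (a / (1 - lam * a * t)) * (κ * φ.1 i j) + (W φ).1 i j))
        =ᶠ[nhdsWithin (1 / lam) (Set.Iio (1 / lam))]
        (fun t => (endNorm (compW (curveA (κ • (1 : Module.End ℝ (so n))) W lam a t)))⁻¹ *
            ((curveA (κ • (1 : Module.End ℝ (so n))) W lam a t) φ).1 i j) := by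
      filter_upwards [self_mem_nhdsWithin] with t ht
      obtain ⟨hd1, hd2⟩ := hden t ht
      rw [hcw, endNorm_smul _ (by positivity), mul_inv]
      simp only [curveA, LinearMap.add_apply, Submodule.coe_add, Matrix.add_apply,
        LinearMap.smul_apply,
        Submodule.coe_smul, Matrix.smul_apply, smul_eq_mul, Module.End.one_apply]
      have := hd1.ne'
      have := hd2.ne'
      rw [mul_comm (1 / (1 - lam * t))⁻¹, mul_assoc ((endNorm W)⁻¹)]
      refine congrArg _ ?_
      field_simp
    refine Filter.Tendsto.congr' hev ?_
    have hl : lam * (1 / lam) = 1 := by field_simp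
    have hcont : ContinuousAt (fun t => (endNorm W)⁻¹ *
        ((1 - lam * t) * (a / (1 - lam * a * t)) * (κ * φ.1 i j) + (W φ).1 i j)) (1 / lam) := by
      have : 1 - lam * a * (1 / lam) ≠ 0 := by
        have : lam * a * (1 / lam) = a := by field_simp
        rw [this]; linarith
      fun_prop (disch := assumption)
    have := hcont.tendsto.mono_left (nhdsWithin_le_nhds (s := Set.Iio (1 / lam)))
    simpa only [hl, sub_self, zero_mul, zero_add] using this
end
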